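/- Cut elimination for LBV: the atomic cut rule ai↑ is admissible in LBV, that is, every structure provable in LBV ∪ {ai↑} is provable in LBV. -/

import Mathlib

/-!
The deep-inference system LBV (the `BV`-free core system of the calculus of
structures of Guglielmi).  Structures are built from the unit `◦`, atoms `a`
and negated atoms `ā` by par `[P,Q]` and copar `(P,Q)`, and are identified
modulo the congruence generated by associativity, commutativity and the
unit laws `[P,◦]=P`, `(P,◦)=P`.  The rules `ai↓`, `s` (and the atomic cut
`ai↑`) apply inside an arbitrary one-hole context and modulo the
equivalence.
-/

namespace LBV

/-- Structures: the unit `◦`, atoms, negated atoms, par `[P,Q]` and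
copar `(P,Q)`. -/
inductive St : Type where
  | unit : St
  | pos  : ℕ → St
  | neg  : ℕ → St
  | par  : St → St → St
  | cop  : St → St → St
deriving DecidableEq

/-- Negation: `¬◦ = ◦`, `¬[P,Q] = (¬P,¬Q)`, `¬(P,Q) = [¬P,¬Q]`, `¬¬P = P`. -/
def St.negS : St → St
  | .unit => .unit
  | .pos a => .neg a
  | .neg a => .pos a
  | .par P Q => .cop P.negS Q.negS
  | .cop P Q => .par P.negS Q.negS

/-- Atoms are the propositional symbols and their negations. -/
def St.isAtom : St → Prop
  | .pos _ => True
  | .neg _ => True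
  | _ => False

/-- Syntactic equivalence of structures: the smallest congruence generated
by associativity and commutativity of par and copar and the unit laws
`[P,◦]=P` and `(P,◦)=P`. -/
inductive Equiv : St → St → Prop where
  | refl (P : St) : Equiv P P
  | symm {P Q : St} : Equiv P Q → Equiv Q P
  | trans {P Q R : St} : Equiv P Q → Equiv Q R → Equiv P R
  | parComm (P Q : St) : Equiv (.par P Q) (.par Q P)
  | copComm (P Q : St) : Equiv (.cop P Q) (.cop Q P)
  | parAssoc (P Q R : St) : Equiv (.par (.par P Q) R) (.par P (.par Q R))
  | copAssoc (P Q R : St) : Equiv (.cop (.cop P Q) R) (.cop P (.cop Q R))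
  | parUnit (P : St) : Equiv (.par P .unit) P
  | copUnit (P : St) : Equiv (.cop P .unit) P
  | parCongr {P P' Q Q' : St} :
      Equiv P P' → Equiv Q Q' → Equiv (.par P Q) (.par P' Q')
  | copCongr {P P' Q Q' : St} :
      Equiv P P' → Equiv Q Q' → Equiv (.cop P Q) (.cop P' Q')

/-- One-hole contexts. -/
inductive Ctx : Type where
  | hole : Ctx
  | parL : Ctx → St → Ctx
  | parR : St → Ctx → Ctx
  | copL : Ctx → St → Ctx
  | copR : St → Ctx → Ctx

/-- Plugging a structure into the hole of a context. -/
def Ctx.fill : Ctx → St → St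
  | .hole, P => P
  | .parL C Q, P => .par (C.fill P) Q
  | .parR Q C, P => .par Q (C.fill P)
  | .copL C Q, P => .cop (C.fill P) Q
  | .copR Q C, P => .cop Q (C.fill P)

/-- Names of the rules: interaction `ai↓`, co-interaction (atomic cut)
`ai↑`, and switch `s`. -/
inductive Rule : Type where
  | aiDown | aiUp | s
deriving DecidableEq

/-- The rules read at the root of a structure (premise on the left,
conclusion on the right). -/
inductive RootStep : Rule → St → St → Prop where
  | aiDown (A : St) (h : A.isAtom) : RootStep .aiDown .unit (.par A A.negS)
  | aiUp (A : St) (h : A.isAtom) : RootStep .aiUp (.cop A A.negS) .unit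
  | s (P Q R : St) : RootStep .s (.cop P (.par Q R)) (.par (.cop P Q) R)

/-- One inference step using a rule from the set `Rs`, applied inside an
arbitrary context and modulo the equivalence. -/
def Step (Rs : Set Rule) (P Q : St) : Prop :=
  ∃ r ∈ Rs, ∃ (C : Ctx) (P' Q' : St),
    RootStep r P' Q' ∧ Equiv P (C.fill P') ∧ Equiv (C.fill Q') Q

/-- Derivations over an arbitrary step relation: a finite sequence of rule
instances from the premise to the conclusion (modulo the equivalence). -/
inductive Deriv (Stp : St → St → Prop) : St → St → Prop where
  | eqv {P Q : St} : Equiv P Q → Deriv Stp P Q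
  | step {P Q R : St} : Stp P Q → Deriv Stp Q R → Deriv Stp P R

/-- The rules of the system LBV. -/
def LBVRules : Set Rule := {.aiDown, .s}

/-- Derivations in LBV. -/
def DerivLBV (P Q : St) : Prop := Deriv (Step LBVRules) P Q

/-- A proof of `Q` in LBV is a derivation from the unit `◦` to `Q`. -/
def ProofLBV (Q : St) : Prop := DerivLBV .unit Q

end LBV

namespace LBV

/-!
Phase semantics in the style of Okada.  Structures modulo equivalence form a commutative monoid
under par, and structures are interpreted as biorthogonally closed sets of a phase space.  The cut
is sound in every phase space, because there it only says that `X` and its orthogonal multiply into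
the pole.  In the phase space of structures whose pole is the set of structures provable without
cut, every `Q` in the interpretation of `P` makes `[P,Q]` provable without cut.  If `P` is provable
with cuts, then `◦` lies in the interpretation of `P` by soundness, so `[P,◦] = P` is provable
without them.

Since `◦` is provable and provable structures are closed under par (the mix rule), the pole is a
submonoid and hence its own orthogonal; this is why it can interpret the unit of both connectives.
-/

section PhaseSpace

open scoped Pointwise

variable {M : Type*} [CommMonoid M]

section Orthogonal

variable {B X Y Z : Set M}

/-- The orthogonal of `X` in the phase space with monoid `M` and pole `B`. -/
def orth (B X : Set M) : Set M := upperPolar (fun p q => p * q ∈ B) X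

theorem orth_eq_lowerPolar (B X : Set M) : orth B X = lowerPolar (fun p q => p * q ∈ B) X := by
  simp only [orth, upperPolar, lowerPolar, mul_comm]

theorem subset_orth_comm : X ⊆ orth B Y ↔ Y ⊆ orth B X := by
  rw [orth_eq_lowerPolar B X]
  exact subset_upperPolar_iff_subset_lowerPolar

theorem orth_anti (h : X ⊆ Y) : orth B Y ⊆ orth B X :=
  upperPolar_anti _ h

theorem orth_orth_orth (B X : Set M) : orth B (orth B (orth B X)) = orth B X := by
  rw [orth_eq_lowerPolar B (orth B X)]
  exact upperPolar_lowerPolar_upperPolar _ X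

theorem orth_orth_subset_orth (h : X ⊆ orth B Y) : orth B (orth B X) ⊆ orth B Y :=
  orth_anti (subset_orth_comm.1 h)

theorem orth_one (B : Set M) : orth B 1 = B := by
  ext q
  simp only [orth, ← Set.singleton_one, mem_upperPolar_singleton, one_mul]

theorem mem_orth_mul {q : M} : q ∈ orth B (X * Z) ↔ ∀ z ∈ Z, z * q ∈ orth B X := by
  constructor
  · rintro hq z hz x hx
    simpa only [mul_assoc] using hq (Set.mul_mem_mul hx hz)
  · rintro hq _ ⟨x, hx, z, hz, rfl⟩
    simpa only [mul_assoc] using hq z hz hx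

theorem orth_closure_mul (B X Z : Set M) : orth B (orth B (orth B X) * Z) = orth B (X * Z) := by
  ext q
  simp only [mem_orth_mul, orth_orth_orth]

theorem orth_mul_closure (B X Z : Set M) : orth B (X * orth B (orth B Z)) = orth B (X * Z) := by
  rw [mul_comm, orth_closure_mul, mul_comm]

theorem orth_self (B : Submonoid M) : orth (B : Set M) B = B := by
  apply Set.Subset.antisymm
  · intro q hq
    simpa only [one_mul] using hq B.one_mem
  · exact fun q hq p hp => B.mul_mem hp hq

end Orthogonal

section Connectives

/-- The interpretation of par in a phase space with pole `B`. -/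
def phasePar (B X Y : Set M) : Set M := orth B (orth B X * orth B Y)

/-- The interpretation of copar in a phase space with pole `B`. -/
def phaseCop (B X Y : Set M) : Set M := orth B (orth B (X * Y))

variable {B X X' Y Y' : Set M}

theorem phasePar_mono (hX : X ⊆ X') (hY : Y ⊆ Y') : phasePar B X Y ⊆ phasePar B X' Y' :=
  orth_anti (Set.mul_subset_mul (orth_anti hX) (orth_anti hY))

theorem phaseCop_mono (hX : X ⊆ X') (hY : Y ⊆ Y') : phaseCop B X Y ⊆ phaseCop B X' Y' :=
  orth_anti (orth_anti (Set.mul_subset_mul hX hY))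

theorem phasePar_comm (B X Y : Set M) : phasePar B X Y = phasePar B Y X := by
  simp only [phasePar, mul_comm]

theorem phaseCop_comm (B X Y : Set M) : phaseCop B X Y = phaseCop B Y X := by
  simp only [phaseCop, mul_comm]

theorem phasePar_assoc (B X Y Z : Set M) :
    phasePar B (phasePar B X Y) Z = phasePar B X (phasePar B Y Z) := by
  simp only [phasePar, orth_closure_mul, orth_mul_closure, mul_assoc]

theorem phaseCop_assoc (B X Y Z : Set M) :
    phaseCop B (phaseCop B X Y) Z = phaseCop B X (phaseCop B Y Z) := by
  simp only [phaseCop, orth_closure_mul, orth_mul_closure, mul_assoc]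

theorem phasePar_pole (B X : Set M) : phasePar B X B = orth B (orth B X) :=
  calc orth B (orth B X * orth B B)
    _ = orth B (orth B X * orth B (orth B 1)) := by rw [orth_one]
    _ = orth B (orth B X) := by rw [orth_mul_closure, mul_one]

theorem phaseCop_pole (B : Submonoid M) (X : Set M) :
    phaseCop (B : Set M) X B = orth (B : Set M) (orth B X) := by
  have pole_eq : (B : Set M) = orth (B : Set M) (orth B 1) := by rw [orth_one, orth_self]
  calc orth (B : Set M) (orth B (X * B))
    _ = orth (B : Set M) (orth B (X * orth B (orth B 1))) := by rw [← pole_eq]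
    _ = orth (B : Set M) (orth B X) := by rw [orth_mul_closure, mul_one]

theorem phaseCop_phasePar_subset (B X Y Z : Set M) :
    phaseCop B X (phasePar B Y Z) ⊆ phasePar B (phaseCop B X Y) Z := by
  rw [phasePar, phasePar, phaseCop, phaseCop, orth_orth_orth]
  apply orth_orth_subset_orth
  rintro _ ⟨x, hx, w, hw, rfl⟩ _ ⟨u, hu, v, hv, rfl⟩
  have hux : u * x ∈ orth B Y := by
    rw [mul_comm X Y, mem_orth_mul] at hu
    simpa only [mul_comm] using hu x hx
  simpa only [mul_assoc, mul_left_comm, mul_comm] using hw (Set.mul_mem_mul hux hv)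

theorem pole_subset_phasePar_orth (B : Submonoid M) (X : Set M) :
    (B : Set M) ⊆ phasePar (B : Set M) X (orth B X) := by
  rintro b hb _ ⟨u, hu, v, hv, rfl⟩
  exact B.mul_mem (hv hu) hb

theorem phaseCop_orth_subset_pole (B X : Set M) : phaseCop B X (orth B X) ⊆ B := by
  have mul_orth_subset : X * orth B X ⊆ orth B 1 := by
    rw [orth_one]
    rintro _ ⟨x, hx, y, hy, rfl⟩
    exact hy hx
  simpa only [phaseCop, orth_one] using orth_orth_subset_orth mul_orth_subset

end Connectives

end PhaseSpace

section Soundness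

variable {M : Type*} [CommMonoid M] (B : Submonoid M) (v : ℕ → Set M)

/-- The interpretation of structures in the phase space `M` with pole `B`.  The atom `a` is sent to
the orthogonal of `v a`, so that the valuation `v` need not consist of closed sets. -/
def interp : St → Set M
  | .unit => B
  | .pos a => orth B (v a)
  | .neg a => orth B (orth B (v a))
  | .par P Q => phasePar B (interp P) (interp Q)
  | .cop P Q => phaseCop B (interp P) (interp Q)

theorem orth_orth_interp (P : St) : orth (B : Set M) (orth B (interp B v P)) = interp B v P := by
  cases P with
  | unit => simp only [interp, orth_self]
  | _ => exact orth_orth_orth _ _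

theorem interp_negS {A : St} (hA : A.isAtom) :
    interp B v A.negS = orth (B : Set M) (interp B v A) := by
  cases A with
  | pos a => rfl
  | neg a => exact (orth_orth_orth _ _).symm
  | _ => exact hA.elim

theorem Equiv.interp_eq {P Q : St} (h : Equiv P Q) : interp B v P = interp B v Q := by
  induction h with
  | refl P => rfl
  | symm _ ih => exact ih.symm
  | trans _ _ ih₁ ih₂ => exact ih₁.trans ih₂
  | parComm P Q => exact phasePar_comm _ _ _
  | copComm P Q => exact phaseCop_comm _ _ _
  | parAssoc P Q R => exact phasePar_assoc _ _ _ _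
  | copAssoc P Q R => exact phaseCop_assoc _ _ _ _
  | parUnit P => exact (phasePar_pole _ _).trans (orth_orth_interp B v P)
  | copUnit P => exact (phaseCop_pole _ _).trans (orth_orth_interp B v P)
  | parCongr _ _ ihP ihQ => simp only [interp, ihP, ihQ]
  | copCongr _ _ ihP ihQ => simp only [interp, ihP, ihQ]

theorem RootStep.interp_subset {r : Rule} {P Q : St} (h : RootStep r P Q) :
    interp B v P ⊆ interp B v Q := by
  cases h with
  | aiDown A hA =>
    simp only [interp, interp_negS B v hA]
    exact pole_subset_phasePar_orth B _
  | aiUp A hA =>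
    simp only [interp, interp_negS B v hA]
    exact phaseCop_orth_subset_pole _ _
  | s P Q R => exact phaseCop_phasePar_subset _ _ _ _

theorem Ctx.interp_fill_mono (C : Ctx) {P Q : St} (h : interp B v P ⊆ interp B v Q) :
    interp B v (C.fill P) ⊆ interp B v (C.fill Q) := by
  induction C with
  | hole => exact h
  | parL C R ih => exact phasePar_mono ih subset_rfl
  | parR R C ih => exact phasePar_mono subset_rfl ih
  | copL C R ih => exact phaseCop_mono ih subset_rfl
  | copR R C ih => exact phaseCop_mono subset_rfl ih

theorem Step.interp_subset {Rs : Set Rule} {P Q : St} (h : Step Rs P Q) :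
    interp B v P ⊆ interp B v Q := by
  obtain ⟨r, -, C, P', Q', hroot, hP, hQ⟩ := h
  calc interp B v P
    _ = interp B v (C.fill P') := hP.interp_eq B v
    _ ⊆ interp B v (C.fill Q') := C.interp_fill_mono B v (hroot.interp_subset B v)
    _ = interp B v Q := hQ.interp_eq B v

theorem Deriv.interp_subset {Rs : Set Rule} {P Q : St} (h : Deriv (Step Rs) P Q) :
    interp B v P ⊆ interp B v Q := by
  induction h with
  | eqv e => exact (e.interp_eq B v).subset
  | step s _ ih => exact (s.interp_subset B v).trans ih

end Soundness

section Derivations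

/-- Composition of contexts: `C.comp D` is `C{D{ }}`. -/
def Ctx.comp : Ctx → Ctx → Ctx
  | .hole, D => D
  | .parL C Q, D => .parL (C.comp D) Q
  | .parR Q C, D => .parR Q (C.comp D)
  | .copL C Q, D => .copL (C.comp D) Q
  | .copR Q C, D => .copR Q (C.comp D)

theorem Ctx.fill_comp (C D : Ctx) (P : St) : (C.comp D).fill P = C.fill (D.fill P) := by
  induction C with
  | hole => rfl
  | _ => simp only [comp, fill, *]

theorem Equiv.fill (C : Ctx) {P Q : St} (h : Equiv P Q) : Equiv (C.fill P) (C.fill Q) := by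
  induction C with
  | hole => exact h
  | parL C R ih => exact .parCongr ih (.refl R)
  | parR R C ih => exact .parCongr (.refl R) ih
  | copL C R ih => exact .copCongr ih (.refl R)
  | copR R C ih => exact .copCongr (.refl R) ih

variable {Rs : Set Rule} {P P' Q Q' R X Y : St}

theorem Step.of_equiv_left (e : Equiv P Q) (s : Step Rs Q R) : Step Rs P R := by
  obtain ⟨r, hr, C, P', Q', hroot, hQ, hR⟩ := s
  exact ⟨r, hr, C, P', Q', hroot, e.trans hQ, hR⟩

theorem Step.fill (C : Ctx) (s : Step Rs P Q) : Step Rs (C.fill P) (C.fill Q) := by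
  obtain ⟨r, hr, D, P', Q', hroot, hP, hQ⟩ := s
  refine ⟨r, hr, C.comp D, P', Q', hroot, ?_, ?_⟩
  · simpa only [Ctx.fill_comp] using hP.fill C
  · simpa only [Ctx.fill_comp] using hQ.fill C

theorem RootStep.deriv {r : Rule} (h : RootStep r P Q) (hr : r ∈ Rs) : Deriv (Step Rs) P Q :=
  .step ⟨r, hr, .hole, P, Q, h, .refl P, .refl Q⟩ (.eqv (.refl Q))

theorem Deriv.trans (d : Deriv (Step Rs) P Q) (d' : Deriv (Step Rs) Q R) :
    Deriv (Step Rs) P R := by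
  induction d with
  | eqv e =>
    cases d' with
    | eqv e' => exact .eqv (e.trans e')
    | step s d'' => exact .step (s.of_equiv_left e) d''
  | step s _ ih => exact .step s (ih d')

instance : Trans (Deriv (Step Rs)) (Deriv (Step Rs)) (Deriv (Step Rs)) := ⟨Deriv.trans⟩

theorem Deriv.fill (C : Ctx) (d : Deriv (Step Rs) P Q) :
    Deriv (Step Rs) (C.fill P) (C.fill Q) := by
  induction d with
  | eqv e => exact .eqv (e.fill C)
  | step s _ ih => exact .step (s.fill C) ih

theorem Deriv.par (dP : Deriv (Step Rs) P P') (dQ : Deriv (Step Rs) Q Q') :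
    Deriv (Step Rs) (.par P Q) (.par P' Q') :=
  (dP.fill (.parL .hole Q)).trans (dQ.fill (.parR P' .hole))

theorem Deriv.cop (dP : Deriv (Step Rs) P P') (dQ : Deriv (Step Rs) Q Q') :
    Deriv (Step Rs) (.cop P Q) (.cop P' Q') :=
  (dP.fill (.copL .hole Q)).trans (dQ.fill (.copR P' .hole))

theorem Deriv.switch (hs : Rule.s ∈ Rs) (P Q R : St) :
    Deriv (Step Rs) (.cop P (.par Q R)) (.par (.cop P Q) R) :=
  (RootStep.s P Q R).deriv hs

theorem Deriv.switch_left (hs : Rule.s ∈ Rs) (P Q R : St) :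
    Deriv (Step Rs) (.cop (.par P R) Q) (.par (.cop P Q) R) :=
  calc Deriv (Step Rs) (.cop (.par P R) Q) (.cop Q (.par P R)) := .eqv (.copComm _ _)
    Deriv (Step Rs) _ (.par (.cop Q P) R) := .switch hs Q P R
    Deriv (Step Rs) _ (.par (.cop P Q) R) := .eqv (.parCongr (.copComm _ _) (.refl R))

theorem Deriv.cop_par_par (hs : Rule.s ∈ Rs) (dP : Deriv (Step Rs) .unit (.par P X))
    (dQ : Deriv (Step Rs) .unit (.par Q Y)) :
    Deriv (Step Rs) .unit (.par (.cop P Q) (.par X Y)) :=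
  calc Deriv (Step Rs) .unit (.cop .unit .unit) := .eqv (.symm (.copUnit _))
    Deriv (Step Rs) _ (.cop (.par P X) (.par Q Y)) := dP.cop dQ
    Deriv (Step Rs) _ (.par (.cop (.par P X) Q) Y) := .switch hs _ Q Y
    Deriv (Step Rs) _ (.par (.par (.cop P Q) X) Y) :=
      (Deriv.switch_left hs P Q X).par (.eqv (.refl Y))
    Deriv (Step Rs) _ (.par (.cop P Q) (.par X Y)) := .eqv (.parAssoc _ _ _)

end Derivations

section Completeness

/-- Equivalence of structures as a setoid. -/
instance St.setoid : Setoid St := ⟨Equiv, .refl, .symm, .trans⟩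

/-- Structures modulo equivalence, as a commutative monoid under par with unit `◦`. -/
abbrev ParMonoid : Type := Quotient St.setoid

instance : CommMonoid ParMonoid where
  mul := Quotient.map₂ St.par fun _ _ e _ _ e' => .parCongr e e'
  one := ⟦.unit⟧
  mul_assoc := by
    rintro ⟨P⟩ ⟨Q⟩ ⟨R⟩
    exact Quotient.sound (.parAssoc P Q R)
  mul_comm := by
    rintro ⟨P⟩ ⟨Q⟩
    exact Quotient.sound (.parComm P Q)
  mul_one := by
    rintro ⟨P⟩
    exact Quotient.sound (.parUnit P)
  one_mul := by
    rintro ⟨P⟩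
    exact Quotient.sound ((Equiv.parComm _ _).trans (.parUnit P))

theorem Equiv.proofLBV_iff {P Q : St} (e : Equiv P Q) : ProofLBV P ↔ ProofLBV Q :=
  ⟨fun h => Deriv.trans h (.eqv e), fun h => Deriv.trans h (.eqv e.symm)⟩

/-- The classes of the structures provable in LBV, the pole of the canonical phase space. -/
def provable : Submonoid ParMonoid where
  carrier := {p | Quotient.lift ProofLBV (fun _ _ e => propext (Equiv.proofLBV_iff e)) p}
  one_mem' := Deriv.eqv (.refl .unit)
  mul_mem' := by
    rintro ⟨P⟩ ⟨Q⟩ (hP : ProofLBV P) (hQ : ProofLBV Q)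
    exact Deriv.trans (.eqv (.symm (.parUnit .unit))) (hP.par hQ)

theorem mk_mem_provable {P : St} : (⟦P⟧ : ParMonoid) ∈ provable ↔ ProofLBV P := Iff.rfl

/-- The interpretation of structures in the canonical phase space: the atom `a` denotes the classes
of those `Q` for which `[a,Q]` is provable. -/
def canonicalInterp : St → Set ParMonoid := interp provable fun a => {⟦.pos a⟧}

theorem canonicalInterp_subset_orth (P : St) :
    canonicalInterp P ⊆ orth (provable : Set ParMonoid) {⟦P⟧} := by
  induction P with
  | unit => exact (orth_one (provable : Set ParMonoid)).symm.subset
  | pos a => exact subset_rfl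
  | neg a =>
    have interaction : ProofLBV (.par (.pos a) (.neg a)) :=
      (RootStep.aiDown (.pos a) trivial).deriv (.inl rfl)
    apply orth_anti
    rintro _ rfl _ rfl
    exact interaction
  | par P Q ihP ihQ =>
    apply orth_anti
    rintro _ rfl
    exact Set.mul_mem_mul (subset_orth_comm.1 ihP rfl) (subset_orth_comm.1 ihQ rfl)
  | cop P Q ihP ihQ =>
    apply orth_orth_subset_orth
    rintro _ ⟨⟨X⟩, hX, ⟨Y⟩, hY, rfl⟩ _ rfl
    have hPX : ProofLBV (.par P X) := ihP hX rfl
    have hQY : ProofLBV (.par Q Y) := ihQ hY rfl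
    exact Deriv.cop_par_par (.inr rfl) hPX hQY

end Completeness

/-- Cut elimination for LBV.
The atomic cut rule `ai↑` is admissible in LBV: every structure provable in
LBV ∪ {ai↑} is provable in LBV. -/
theorem lbv_cut_elimination (P : St)
    (h : Deriv (Step {Rule.aiDown, Rule.s, Rule.aiUp}) .unit P) :
    ProofLBV P := by
  have one_mem : 1 ∈ canonicalInterp P := h.interp_subset _ _ provable.one_mem
  have mul_one_mem : ⟦P⟧ * 1 ∈ provable := canonicalInterp_subset_orth P one_mem rfl
  rwa [mul_one, mk_mem_provable] at mul_one_mem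

end LBV
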